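/- arXiv:2602.16046 — 3 statements merged into one kernel-verified Lean document; each statement's English description precedes it below -/
import Mathlib

section
/- Let X be an infinite Tychonoff space such that X × Y is Menger for every hereditarily Lindelöf Menger infinite Tychonoff space Y. Then for every free ultrafilter U on ℕ with 𝔟(U) = 𝔡 and every hereditarily Lindelöf U-Menger infinite Tychonoff space T, the product X × T is U-Menger (i.e., in the class of hereditarily Lindelöf spaces, each productively Menger space is productively U-Menger for all ultrafilters U with 𝔟(U) = 𝔡). -/
open Cardinal

/-- `a ≤* b`: the set `[a ≤ b]` is cofinite. -/
def LeStar (a b : ℕ → ℕ) : Prop := {n | ¬ a n ≤ b n}.Finite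

/-- `a ≤^∞ b`: the set `[a ≤ b]` is infinite. -/
def LeInf (a b : ℕ → ℕ) : Prop := {n | a n ≤ b n}.Infinite

/-- `a ≤_U b`: the set `[a ≤ b]` belongs to the ultrafilter `U`. -/
def LeU (U : Ultrafilter ℕ) (a b : ℕ → ℕ) : Prop := {n | a n ≤ b n} ∈ U

/-- An ultrafilter is free if it extends the cofinite filter. -/
def Free (U : Ultrafilter ℕ) : Prop := (U : Filter ℕ) ≤ Filter.cofinite

/-- Elements of `[ω]^ω`, identified with their increasing enumerations. -/
abbrev IncSeq : Type := {f : ℕ → ℕ // StrictMono f}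

/-- A subset of `[ω]^ω` is bounded if some element of `[ω]^ω` `≤*`-dominates it. -/
def Bounded (A : Set IncSeq) : Prop := ∃ b : IncSeq, ∀ a ∈ A, LeStar a.1 b.1

/-- A subset of `[ω]^ω` is dominating if it `≤*`-dominates every element of `[ω]^ω`. -/
def Dominating (D : Set IncSeq) : Prop := ∀ a : IncSeq, ∃ d ∈ D, LeStar a.1 d.1

/-- A subset of `[ω]^ω` is `≤_U`-bounded if some element of `[ω]^ω` `≤_U`-dominates it. -/
def UBounded (U : Ultrafilter ℕ) (A : Set IncSeq) : Prop := ∃ b : IncSeq, ∀ a ∈ A, LeU U a.1 b.1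

/-- `𝔟`: the least cardinality of an unbounded subset of `[ω]^ω`. -/
noncomputable def frakB : Cardinal := sInf {c | ∃ A : Set IncSeq, ¬ Bounded A ∧ c = #A}

/-- `𝔡`: the least cardinality of a dominating subset of `[ω]^ω`. -/
noncomputable def frakD : Cardinal := sInf {c | ∃ D : Set IncSeq, Dominating D ∧ c = #D}

/-- `𝔟(U)`: the least cardinality of a `≤_U`-unbounded subset of `[ω]^ω`. -/
noncomputable def frakBU (U : Ultrafilter ℕ) : Cardinal :=
  sInf {c | ∃ A : Set IncSeq, ¬ UBounded U A ∧ c = #A}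

/-- A set `A ⊆ [ω]^ω` is `𝔡`-unbounded if `|A| ≥ 𝔡` and every bounded subset of `A`
has cardinality less than `𝔡`. -/
def DUnbounded (A : Set IncSeq) : Prop :=
  frakD ≤ #A ∧ ∀ B ⊆ A, Bounded B → #B < frakD

/-- A space is Menger if for every sequence of open covers there are finite
subfamilies whose unions form a cover. -/
def Menger (Z : Type*) [TopologicalSpace Z] : Prop :=
  ∀ 𝒰 : ℕ → Set (Set Z), (∀ n, (∀ u ∈ 𝒰 n, IsOpen u) ∧ ⋃₀ 𝒰 n = Set.univ) →
    ∃ F : ℕ → Set (Set Z), (∀ n, F n ⊆ 𝒰 n ∧ (F n).Finite) ∧ (⋃ n, ⋃₀ F n) = Set.univ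

/-- A space is `U`-Menger if for every sequence of open covers there are finite
subfamilies such that `{n | z ∈ ⋃ F n} ∈ U` for every point `z`. -/
def UMenger (U : Ultrafilter ℕ) (Z : Type*) [TopologicalSpace Z] : Prop :=
  ∀ 𝒰 : ℕ → Set (Set Z), (∀ n, (∀ u ∈ 𝒰 n, IsOpen u) ∧ ⋃₀ 𝒰 n = Set.univ) →
    ∃ F : ℕ → Set (Set Z), (∀ n, F n ⊆ 𝒰 n ∧ (F n).Finite) ∧
      ∀ z : Z, {n | z ∈ ⋃₀ F n} ∈ U

universe u v w

open Set Filter Topology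

/-- A countable subset of `ω₁` has a strict upper bound. -/
theorem exists_forall_lt_of_countable_omega_one {s : Set (ℵ₁ : Cardinal.{0}).ord.ToType}
    (hs : s.Countable) : ∃ a, ∀ i ∈ s, i < a := by
  have h : ¬ IsCofinal s := fun hc => by
    have h₁ := Order.cof_le hc
    rw [Ordinal.cof_toType, Cardinal.isRegular_aleph_one.cof_ord] at h₁
    exact absurd (h₁.trans (Cardinal.mk_le_aleph0_iff.2 hs.to_subtype))
      (not_le.2 Cardinal.aleph0_lt_aleph_one)
  simpa [IsCofinal] using h

/-- A hereditarily Lindelöf Hausdorff space has cardinality at most `2 ^ ℵ₁`, so it has a copy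
in every universe. -/
theorem HereditarilyLindelofSpace.small {T : Type*} [TopologicalSpace T] [T2Space T]
    [HereditarilyLindelofSpace T] : Small.{v} T := by
  classical
  have hsplit : ∀ S : Set T, ∃ O V : Set T, IsOpen O ∧ IsOpen V ∧ Disjoint O V ∧
      (S.Nontrivial → (S ∩ O).Nonempty ∧ (S ∩ V).Nonempty) := by
    intro S
    by_cases hS : S.Nontrivial
    · obtain ⟨x, hx, y, hy, hxy⟩ := hS
      obtain ⟨O, V, hO, hV, hxO, hyV, hd⟩ := t2_separation hxy
      exact ⟨O, V, hO, hV, hd, fun _ => ⟨⟨x, hx, hxO⟩, ⟨y, hy, hyV⟩⟩⟩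
    · exact ⟨∅, ∅, isOpen_empty, isOpen_empty, disjoint_bot_left, fun h => absurd h hS⟩
  choose O V hO hV hd hOV using hsplit
  let Ω := (ℵ₁ : Cardinal.{0}).ord.ToType
  let wf : WellFounded ((· < ·) : Ω → Ω → Prop) := wellFounded_lt
  let cut (x : T) (S : Set T) : Set T := if x ∈ O S then (V S)ᶜ else (O S)ᶜ
  have hcut : ∀ x S, IsClosed (cut x S) := fun x S => by
    by_cases h : x ∈ O S <;> simp [cut, h, hO, hV]
  have hxcut : ∀ x S, x ∈ cut x S := fun x S => by
    by_cases h : x ∈ O S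
    · simpa [cut, h] using (hd S).notMem_of_mem_left h
    · simp [cut, h]
  let G (x : T) : Ω → Set T := wf.fix fun α ih => {y | ∀ γ (h : γ < α), y ∈ cut x (ih γ h)}
  have hG : ∀ x α, G x α = {y | ∀ γ < α, y ∈ cut x (G x γ)} := fun x α => wf.fix_eq _ α
  have hGc : ∀ x α, IsClosed (G x α) := fun x α => by
    rw [hG]
    simp only [ofPred_forall]
    exact isClosed_iInter fun γ => isClosed_iInter fun _ => hcut _ _
  have hxG : ∀ x α, x ∈ G x α := fun x α => by
    rw [hG]
    exact fun γ _ => hxcut _ _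
  have hanti : ∀ x, Antitone (G x) := fun x α β h y hy => by
    rw [hG] at hy ⊢
    exact fun γ hγ => hy γ (hγ.trans_le h)
  refine small_of_injective (f := fun x : T => fun α : Ω => x ∈ O (G x α)) fun x y hxy => ?_
  by_contra hne
  have hcode : ∀ α, (x ∈ O (G x α)) = (y ∈ O (G y α)) := fun α => congrFun hxy α
  have hGG : ∀ α, G x α = G y α := fun α => by
    induction α using wf.induction with
    | _ α ih =>
      rw [hG, hG]
      ext p
      refine forall₂_congr fun γ hγ => ?_
      have := hcode γ
      rw [ih γ hγ] at this ⊢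
      simp only [cut, this]
  have hnt : ∀ α, (G x α).Nontrivial := fun α => ⟨x, hxG x α, y, hGG α ▸ hxG y α, hne⟩
  obtain ⟨s, hs, hsG⟩ := eq_closed_inter_countable (G x) (hGc x)
  obtain ⟨b, hb⟩ := exists_forall_lt_of_countable_omega_one hs
  obtain ⟨c, hc⟩ := exists_forall_lt_of_countable_omega_one (countable_singleton b)
  have hbc : G x b ⊆ G x c := by
    calc G x b ⊆ ⋂ i ∈ s, G x i := subset_iInter₂ fun i hi => hanti x (hb i hi).le
      _ = ⋂ i, G x i := hsG
      _ ⊆ G x c := iInter_subset _ _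
  have hbcut : G x b ⊆ cut x (G x b) := fun p hp => by
    have := hbc hp
    rw [hG] at this
    exact this b (hc b rfl)
  obtain ⟨⟨p, hp, hpO⟩, ⟨q, hq, hqV⟩⟩ := hOV _ (hnt b)
  by_cases h : x ∈ O (G x b)
  · have := hbcut hq
    simp only [cut, h, if_true] at this
    exact this hqV
  · have := hbcut hp
    simp only [cut, h, if_false] at this
    exact this hpO

/-- The product of a hereditarily Lindelöf space with a second countable space is hereditarily
Lindelöf. -/
instance HereditarilyLindelofSpace.prod {T P : Type*} [TopologicalSpace T] [TopologicalSpace P]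
    [HereditarilyLindelofSpace T] [SecondCountableTopology P] :
    HereditarilyLindelofSpace (T × P) := by
  refine ⟨fun s _ => isLindelof_of_countable_subcover fun {ι} W hW hs => ?_⟩
  let ℬ := TopologicalSpace.countableBasis P
  let O (B : Set P) (i : ι) : Set T := ⋃₀ {o | IsOpen o ∧ o ×ˢ B ⊆ W i}
  have hO : ∀ B i, IsOpen (O B i) := fun B i => isOpen_sUnion fun o ho => ho.1
  choose t htc ht using fun B => eq_open_union_countable (O B) (hO B)
  refine ⟨⋃ B ∈ ℬ, t B, (TopologicalSpace.countable_countableBasis P).biUnion fun B _ => htc B,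
    fun ⟨a, p⟩ hap => ?_⟩
  obtain ⟨i, hi⟩ := mem_iUnion.1 (hs hap)
  obtain ⟨o, v, ho, hv, hao, hpv, hov⟩ := isOpen_prod_iff.1 (hW i) a p hi
  obtain ⟨B, hB, hpB, hBv⟩ :=
    (TopologicalSpace.isBasis_countableBasis P).exists_subset_of_mem_open hpv hv
  have ha : a ∈ ⋃ j, O B j :=
    mem_iUnion.2 ⟨i, o, ⟨ho, (prod_mono subset_rfl hBv).trans hov⟩, hao⟩
  rw [← ht B] at ha
  obtain ⟨j, hj, o', ⟨_, ho'⟩, hao'⟩ := mem_iUnion₂.1 ha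
  exact mem_iUnion₂.2 ⟨j, mem_iUnion₂.2 ⟨B, hB, hj⟩, ho' ⟨hao', hpB⟩⟩

/-- Every sequence of natural numbers is dominated by a strictly increasing one. -/
theorem exists_incSeq_ge (g : ℕ → ℕ) : ∃ b : IncSeq, ∀ n, g n ≤ b.1 n := by
  refine ⟨⟨fun n => n + ∑ i ∈ Finset.range (n + 1), g i, fun m n h => ?_⟩, fun n => ?_⟩
  · exact add_lt_add_of_lt_of_le h
      (Finset.sum_le_sum_of_subset (Finset.range_subset_range.2 (by omega)))
  · exact (Finset.single_le_sum (f := g) (fun _ _ => Nat.zero_le _)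
      (Finset.self_mem_range_succ n)).trans (Nat.le_add_left _ _)

/-- A family of fewer than `𝔟(U)` sequences is `≤_U`-bounded. -/
theorem exists_leU_of_mk_lt {U : Ultrafilter ℕ} {ι : Type} (hι : #ι < frakBU U)
    (h : ι → ℕ → ℕ) : ∃ b : IncSeq, ∀ i, LeU U (h i) b.1 := by
  choose g hg using fun i => exists_incSeq_ge (h i)
  have hb : UBounded U (range g) := by
    by_contra hb
    exact notMem_of_lt_csInf' (Cardinal.mk_range_le.trans_lt hι) ⟨range g, hb, rfl⟩
  obtain ⟨b, hb⟩ := hb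
  exact ⟨b, fun i => mem_of_superset (hb _ ⟨i, rfl⟩) fun n hn => (hg i n).trans hn⟩

/-- If `𝔟(U) = 𝔡`, a `≤_U`-unbounded family contains a family `f ∘ z` that is above a dominating
family `d` on sets in `U` and all of whose `≤_U`-bounded subfamilies have fewer than `𝔟(U)`
members. -/
theorem exists_scale {U : Ultrafilter ℕ} (hU : Free U) (hbu : frakBU U = frakD) {Z : Type*}
    (f : Z → ℕ → ℕ) (hf : ∀ b : ℕ → ℕ, ∃ z, ¬ LeU U (f z) b) :
    ∃ (ι : Type) (z : ι → Z) (d : ι → ℕ → ℕ), (∀ i, Monotone (d i)) ∧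
      (∀ i, {n | d i n < f (z i) n} ∈ U) ∧
      (∀ c : ℕ → ℕ, ∃ i, ∀ᶠ n in atTop, c n ≤ d i n) ∧
      ∀ c : ℕ → ℕ, #{i // ¬ LeU U c (f (z i))} < frakBU U := by
  have hne : {c | ∃ D : Set IncSeq, Dominating D ∧ c = #D}.Nonempty :=
    ⟨_, univ, fun a => ⟨a, mem_univ a, by simp [LeStar]⟩, rfl⟩
  obtain ⟨D, hD, hDc⟩ := csInf_mem hne
  change frakD = _ at hDc
  let ι := frakD.ord.ToType
  obtain ⟨e⟩ : Nonempty (ι ≃ D) := Cardinal.eq.1 (by simp [ι, ← hDc])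
  have hI : ∀ i : ι, #(Iio i) < frakBU U := fun i => by
    rw [hbu]
    simpa [ι] using Cardinal.mk_Iio_lt i (by simp [ι])
  choose b hb using fun i : ι => exists_leU_of_mk_lt (hI i) fun j => (e j.1).1.1
  let d (i : ι) (n : ℕ) : ℕ := max ((b i).1 n) ((e i).1.1 n)
  choose z hz using fun i => hf (d i)
  have hlt : ∀ i, {n | d i n < f (z i) n} ∈ U := fun i => by
    have := Ultrafilter.compl_mem_iff_notMem.2 (hz i)
    exact mem_of_superset this fun n hn => by simpa using hn
  have hdom : ∀ c : ℕ → ℕ, ∃ i, ∀ᶠ n in atTop, c n ≤ (e i).1.1 n := fun c => by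
    obtain ⟨a, ha⟩ := exists_incSeq_ge c
    obtain ⟨x, hx, hax⟩ := hD a
    refine ⟨e.symm ⟨x, hx⟩, ?_⟩
    rw [← Nat.cofinite_eq_atTop, e.apply_symm_apply]
    exact mem_of_superset hax.compl_mem_cofinite fun n hn =>
      (ha n).trans (not_not.1 hn)
  refine ⟨ι, z, d, fun i => (b i).2.monotone.max (e i).1.2.monotone, hlt, fun c => ?_, fun c => ?_⟩
  · obtain ⟨i, hi⟩ := hdom c
    exact ⟨i, hi.mono fun n hn => hn.trans (le_max_right _ _)⟩
  · obtain ⟨i, hi⟩ := hdom c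
    refine (Cardinal.mk_le_mk_of_subset ?_).trans_lt (hI i)
    intro j hj
    by_contra hij
    apply hj
    have hU' : {n | c n ≤ (e i).1.1 n} ∈ U := hU (Nat.cofinite_eq_atTop ▸ hi)
    have hle : {n | (e i).1.1 n ≤ d j n} ∈ U := by
      rcases (not_lt.1 (mt mem_Iio.2 hij)).eq_or_lt with rfl | h
      · exact univ_mem' fun n => show (e i).1.1 n ≤ d i n from le_max_right _ _
      · exact mem_of_superset (hb j ⟨i, h⟩) fun n hn =>
          show (e i).1.1 n ≤ d j n from le_trans hn (le_max_left _ _)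
    filter_upwards [hU', hle, hlt j] with n h₁ h₂ h₃
    exact (h₁.trans h₂).trans (le_of_lt h₃)

/-- Every open cover of a nonempty Lindelöf space has a subcover enumerated by `ℕ`. -/
theorem exists_seq_subcover {Z : Type*} [TopologicalSpace Z] [LindelofSpace Z] [Nonempty Z]
    {𝒰 : Set (Set Z)} (h𝒰 : (∀ u ∈ 𝒰, IsOpen u) ∧ ⋃₀ 𝒰 = Set.univ) :
    ∃ e : ℕ → Set Z, (∀ j, e j ∈ 𝒰) ∧ ∀ z, ∃ j, z ∈ e j := by
  obtain ⟨s, hsc, hcov⟩ :=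
    isLindelof_univ.elim_countable_subcover (fun u : 𝒰 => u.1) (fun u => h𝒰.1 _ u.2)
      (by rw [← sUnion_eq_iUnion, h𝒰.2])
  have hne : s.Nonempty := by
    obtain ⟨i, hi, _⟩ := mem_iUnion₂.1 (hcov (mem_univ (Classical.arbitrary Z)))
    exact ⟨i, hi⟩
  obtain ⟨k, rfl⟩ := hsc.exists_eq_range hne
  refine ⟨fun j => (k j).1, fun j => (k j).2, fun z => ?_⟩
  simpa using hcov (mem_univ z)

theorem Menger.lindelofSpace {Z : Type*} [TopologicalSpace Z] (hZ : Menger Z) :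
    LindelofSpace Z := by
  refine ⟨isLindelof_of_countable_subcover fun {ι} W hW hcov => ?_⟩
  obtain ⟨F, hF, hcF⟩ := hZ (fun _ => range W) fun _ =>
    ⟨by rintro _ ⟨i, rfl⟩; exact hW i, by rw [sUnion_range]; exact univ_subset_iff.1 hcov⟩
  choose g hg using fun u : range W => u.2
  refine ⟨g '' ⋃ n, Subtype.val ⁻¹' F n, (countable_iUnion fun n =>
    (hF n).2.countable.preimage Subtype.val_injective).image g, fun z _ => ?_⟩
  have hz : z ∈ ⋃ n, ⋃₀ F n := hcF ▸ mem_univ z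
  obtain ⟨n, u, hu, hzu⟩ := mem_iUnion.1 hz
  refine mem_iUnion₂.2 ⟨g ⟨u, (hF n).1 hu⟩, ⟨_, mem_iUnion.2 ⟨n, hu⟩, rfl⟩, ?_⟩
  rwa [hg]

/-- For increasing countable covers, the Menger property catches every point infinitely often. -/
theorem Menger.exists_frequently {Z : Type*} [TopologicalSpace Z] (hZ : Menger Z)
    (O : ℕ → ℕ → Set Z) (hO : ∀ n k, IsOpen (O n k)) (hmono : ∀ n, Monotone (O n))
    (hcov : ∀ n z, ∃ k, z ∈ O n k) :
    ∃ c : ℕ → ℕ, ∀ z N, ∃ n ≥ N, z ∈ O n (c n) := by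
  have hshift : ∀ N, ∃ c : ℕ → ℕ, ∀ z, ∃ n ≥ N, z ∈ O n (c n) := fun N => by
    obtain ⟨F, hF, hcF⟩ := hZ (fun n => range (O (N + n))) fun n =>
      ⟨by rintro _ ⟨k, rfl⟩; exact hO _ k, by
        rw [sUnion_range]
        exact eq_univ_of_forall fun z => mem_iUnion.2 (hcov _ z)⟩
    have hbd : ∀ n, ∃ c, ∀ u ∈ F n, u ⊆ O (N + n) c := fun n => by
      choose! g hg using fun (u : Set Z) (hu : u ∈ F n) => (hF n).1 hu
      obtain ⟨c, hc⟩ := ((hF n).2.image g).bddAbove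
      exact ⟨c, fun u hu => hg u hu ▸ hmono _ (hc ⟨u, hu, rfl⟩)⟩
    choose c hc using hbd
    refine ⟨fun n => c (n - N), fun z => ?_⟩
    have hz : z ∈ ⋃ n, ⋃₀ F n := hcF ▸ mem_univ z
    obtain ⟨n, u, hu, hzu⟩ := mem_iUnion.1 hz
    exact ⟨N + n, by omega, by simpa using hc n u hu hzu⟩
  choose c hc using hshift
  refine ⟨fun n => (Finset.range (n + 1)).sup fun N => c N n, fun z N => ?_⟩
  obtain ⟨n, hn, hz⟩ := hc N z
  exact ⟨n, hn, hmono n (Finset.le_sup (f := fun N => c N n)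
    (Finset.mem_range.2 (by omega))) hz⟩

/-- A Lindelöf space is `U`-Menger if all its upper semicontinuous images in the nondecreasing
sequences are `≤_U`-bounded. -/
theorem UMenger.of_forall_bounded {U : Ultrafilter ℕ} {Z : Type*} [TopologicalSpace Z]
    [LindelofSpace Z] [Nonempty Z]
    (h : ∀ f : Z → ℕ → ℕ, (∀ n k, IsOpen {z | f z n ≤ k}) → (∀ z, Monotone (f z)) →
      ∃ b : ℕ → ℕ, ∀ z, LeU U (f z) b) : UMenger U Z := by
  classical
  intro 𝒰 h𝒰
  choose e he hcov using fun n => exists_seq_subcover (h𝒰 n)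
  have hex : ∀ z n, ∃ k, ∀ m ≤ n, ∃ j ≤ k, z ∈ e m j := fun z n => by
    choose g hg using fun m => hcov m z
    exact ⟨(Finset.range (n + 1)).sup g, fun m hm =>
      ⟨g m, Finset.le_sup (Finset.mem_range.2 (by omega)), hg m⟩⟩
  have hle : ∀ z n k, Nat.find (hex z n) ≤ k ↔ ∀ m ≤ n, ∃ j ≤ k, z ∈ e m j := fun z n k => by
    refine ⟨fun hk m hm => ?_, fun hk => Nat.find_min' _ hk⟩
    obtain ⟨j, hj, hz⟩ := Nat.find_spec (hex z n) m hm
    exact ⟨j, hj.trans hk, hz⟩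
  have hopen : ∀ n k, IsOpen {z | Nat.find (hex z n) ≤ k} := fun n k => by
    have : {z | Nat.find (hex z n) ≤ k} = ⋂ m ∈ Iic n, ⋃ j ∈ Iic k, e m j := by
      ext z
      simp [hle]
    rw [this]
    exact (finite_Iic n).isOpen_biInter fun m _ =>
      isOpen_biUnion fun j _ => (h𝒰 m).1 _ (he m j)
  obtain ⟨b, hb⟩ := h (fun z n => Nat.find (hex z n)) hopen fun z n m hnm =>
    (hle z n _).2 fun i hi => (hle z m _).1 le_rfl i (hi.trans hnm)
  refine ⟨fun n => e n '' Iic (b n), fun n => ⟨?_, (finite_Iic _).image _⟩, fun z => ?_⟩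
  · rintro _ ⟨j, _, rfl⟩
    exact he n j
  · filter_upwards [hb z] with n hn
    obtain ⟨j, hj, hz⟩ := (hle z n _).1 hn n le_rfl
    exact ⟨e n j, ⟨j, hj, rfl⟩, hz⟩

theorem UMenger.of_homeomorph {U : Ultrafilter ℕ} {Z W : Type*} [TopologicalSpace Z]
    [TopologicalSpace W] (e : Z ≃ₜ W) (hZ : UMenger U Z) : UMenger U W := by
  intro 𝒰 h𝒰
  have hcov : ∀ n, (∀ u ∈ (fun u => e ⁻¹' u) '' 𝒰 n, IsOpen u) ∧
      ⋃₀ ((fun u => e ⁻¹' u) '' 𝒰 n) = Set.univ := fun n => by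
    refine ⟨?_, eq_univ_of_forall fun z => ?_⟩
    · rintro _ ⟨u, hu, rfl⟩
      exact ((h𝒰 n).1 u hu).preimage e.continuous
    · have hz : e z ∈ ⋃₀ 𝒰 n := (h𝒰 n).2 ▸ mem_univ _
      obtain ⟨u, hu, hz⟩ := hz
      exact ⟨_, ⟨u, hu, rfl⟩, hz⟩
  obtain ⟨F, hF, hcF⟩ := hZ _ hcov
  refine ⟨fun n => (fun u => e.symm ⁻¹' u) '' F n, fun n => ⟨?_, (hF n).2.image _⟩, fun w => ?_⟩
  · rintro _ ⟨u, hu, rfl⟩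
    obtain ⟨v, hv, rfl⟩ := (hF n).1 hu
    simpa [← preimage_comp] using hv
  · filter_upwards [hcF (e.symm w)] with n hn
    obtain ⟨u, hu, hw⟩ := hn
    exact ⟨_, ⟨u, hu, rfl⟩, hw⟩

theorem UMenger.menger {U : Ultrafilter ℕ} {Z : Type*} [TopologicalSpace Z] (hZ : UMenger U Z) :
    Menger Z := fun 𝒰 h𝒰 => by
  obtain ⟨F, hF, hcF⟩ := hZ 𝒰 h𝒰
  refine ⟨F, hF, eq_univ_of_forall fun z => ?_⟩
  obtain ⟨n, hn⟩ := U.nonempty_of_mem (hcF z)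
  exact mem_iUnion.2 ⟨n, hn⟩

/-- A neighbourhood of the compact set of pairs `(a, q)` with `q` infinite from `n` on contains all
pairs with `q` at least `k` from `n` on, for some `k`. -/
theorem exists_forall_ge_mem {V : Set ((ℕ → Bool) × (ℕ → ℕ∞))} (hV : IsOpen V) (n : ℕ)
    (hn : ∀ p : (ℕ → Bool) × (ℕ → ℕ∞), (∀ i ≥ n, p.2 i = ⊤) → p ∈ V) :
    ∃ k : ℕ, ∀ p : (ℕ → Bool) × (ℕ → ℕ∞), (∀ i ≥ n, (k : ℕ∞) ≤ p.2 i) → p ∈ V := by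
  let K (k : ℕ) : Set ((ℕ → Bool) × (ℕ → ℕ∞)) := {p | ∀ i ≥ n, (k : ℕ∞) ≤ p.2 i}
  have hK : ∀ k, IsClosed (K k) := fun k => by
    simp only [K, ofPred_forall]
    exact isClosed_iInter fun i => isClosed_iInter fun _ =>
      isClosed_le continuous_const ((continuous_apply i).comp continuous_snd)
  have hanti : Antitone K := fun k l hkl p hp i hi => (Nat.cast_le.2 hkl).trans (hp i hi)
  refine exists_subset_nhds_of_isCompact hanti.directed_ge (fun k => (hK k).isCompact)
    fun p hp => hV.mem_nhds (hn p fun i hi => ?_)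
  exact ENat.eq_top_iff_forall_ge.2 fun k => mem_iInter.1 hp k i hi

/-- The points `(t, a, q)` with `q` eventually infinite, together with the points
`(t i, A i, y i)`. -/
def concentratedSet {T ι : Type*} (t : ι → T) (A : ι → ℕ → Bool) (y : ι → ℕ → ℕ) :
    Set (T × (ℕ → Bool) × (ℕ → ℕ∞)) :=
  {p | (∃ N, ∀ n ≥ N, p.2.2 n = ⊤) ∨ ∃ i, p = (t i, A i, fun n => (y i n : ℕ∞))}

/-- If all but fewer than `𝔟(U)` of the sequences `y i` are `≤_U`-above any given sequence, then
`concentratedSet t A y` is Menger. -/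
theorem menger_concentratedSet {U : Ultrafilter ℕ} (hU : Free U) {T : Type*} [TopologicalSpace T]
    [HereditarilyLindelofSpace T] [Nonempty T] (hT : UMenger U T) {ι : Type} (t : ι → T)
    (A : ι → ℕ → Bool) (y : ι → ℕ → ℕ) (hy : ∀ i, Monotone (y i))
    (hsmall : ∀ c : ℕ → ℕ, #{i // ¬ LeU U c (y i)} < frakBU U) :
    Menger (concentratedSet t A y) := by
  intro 𝒲 h𝒲
  have htop : ∀ (s : T) (p : (ℕ → Bool) × (ℕ → ℕ∞)) (n : ℕ), (∀ i ≥ n, p.2 i = ⊤) →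
      (s, p) ∈ concentratedSet t A y := fun s p n h => Or.inl ⟨n, h⟩
  have : Nonempty (concentratedSet t A y) :=
    ⟨⟨(Classical.arbitrary T, fun _ => true, fun _ => ⊤), Or.inl ⟨0, fun _ _ => rfl⟩⟩⟩
  let good (n : ℕ) (o : Set T) (k : ℕ) (G : Set (Set (concentratedSet t A y))) : Prop :=
    G ⊆ 𝒲 n ∧ G.Finite ∧ ∀ p : concentratedSet t A y, p.1.1 ∈ o →
      (∀ i ≥ n, (k : ℕ∞) ≤ p.1.2.2 i) → p ∈ ⋃₀ G
  have hgood : ∀ n s, ∃ o, IsOpen o ∧ s ∈ o ∧ ∃ k G, good n o k G := fun n s => by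
    have hext : ∀ w : 𝒲 n, ∃ v : Set (T × (ℕ → Bool) × (ℕ → ℕ∞)),
        IsOpen v ∧ Subtype.val ⁻¹' v = w.1 := fun w =>
      isOpen_induced_iff.1 ((h𝒲 n).1 _ w.2)
    choose v hv hvw using hext
    let K : Set ((ℕ → Bool) × (ℕ → ℕ∞)) := {p | ∀ i ≥ n, p.2 i = ⊤}
    have hK : IsCompact K := by
      refine IsClosed.isCompact ?_
      simp only [K, ofPred_forall]
      exact isClosed_iInter fun i => isClosed_iInter fun _ =>
        isClosed_eq ((continuous_apply i).comp continuous_snd) continuous_const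
    obtain ⟨S, hS⟩ := (isCompact_singleton (x := s)).prod hK |>.elim_finite_subcover v hv (by
      rintro ⟨a, p⟩ ⟨rfl, hp⟩
      have hp' : (⟨(a, p), htop a p n hp⟩ : concentratedSet t A y) ∈ ⋃₀ 𝒲 n :=
        (h𝒲 n).2 ▸ mem_univ _
      obtain ⟨w, hw, hpw⟩ := hp'
      exact mem_iUnion.2 ⟨⟨w, hw⟩, by
        change (⟨(a, p), htop a p n hp⟩ : concentratedSet t A y) ∈ Subtype.val ⁻¹' v ⟨w, hw⟩
        rwa [hvw]⟩)
    obtain ⟨o, V, ho, hV, hso, hKV, hoV⟩ := generalized_tube_lemma isCompact_singleton hK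
      (isOpen_biUnion fun w (_ : w ∈ S) => hv w) hS
    obtain ⟨k, hk⟩ := exists_forall_ge_mem hV n fun p hp => hKV hp
    refine ⟨o, ho, hso rfl, k, Subtype.val '' (S : Set (𝒲 n)), ?_,
      S.finite_toSet.image _, fun p hp hpk => ?_⟩
    · rintro _ ⟨w, _, rfl⟩
      exact w.2
    · obtain ⟨w, hw, hpw⟩ := mem_iUnion₂.1 (hoV ⟨hp, hk p.1.2 hpk⟩)
      exact ⟨w.1, ⟨w, hw, rfl⟩, by rw [← hvw w]; exact hpw⟩
  obtain ⟨F, hF, hcF⟩ := hT (fun n => {o | IsOpen o ∧ ∃ k G, good n o k G}) fun n =>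
    ⟨fun o ho => ho.1, eq_univ_of_forall fun s => by
      obtain ⟨o, ho, hs, h⟩ := hgood n s
      exact ⟨o, ⟨ho, h⟩, hs⟩⟩
  have hunif : ∀ n, ∃ k G, good n (⋃₀ F n) k G := fun n => by
    choose! k G hkG using fun (o : Set T) (ho : o ∈ F n) => ((hF n).1 ho).2
    obtain ⟨c, hc⟩ := ((hF n).2.image k).bddAbove
    refine ⟨c, ⋃ o ∈ F n, G o, iUnion₂_subset fun o ho => (hkG o ho).1,
      (hF n).2.biUnion fun o ho => (hkG o ho).2.1, ?_⟩
    rintro p ⟨o, ho, hpo⟩ hp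
    obtain ⟨w, hw, hpw⟩ := (hkG o ho).2.2 p hpo fun i hi =>
      (Nat.cast_le.2 (hc ⟨o, ho, rfl⟩)).trans (hp i hi)
    exact ⟨w, mem_iUnion₂.2 ⟨o, ho, hw⟩, hpw⟩
  choose k G hG using hunif
  choose e he hcov using fun n => exists_seq_subcover (h𝒲 n)
  let pt (i : ι) : concentratedSet t A y := ⟨(t i, A i, fun n => (y i n : ℕ∞)), Or.inr ⟨i, rfl⟩⟩
  choose g hg using fun (i : ι) n => hcov n (pt i)
  obtain ⟨b, hb⟩ := exists_leU_of_mk_lt (hsmall k) fun i => g i.1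
  refine ⟨fun n => G n ∪ e n '' Iic (b.1 n), fun n =>
    ⟨union_subset (hG n).1 ?_, (hG n).2.1.union ((finite_Iic _).image _)⟩,
    eq_univ_of_forall fun p => ?_⟩
  · rintro _ ⟨j, _, rfl⟩
    exact he n j
  suffices h : ∃ n, p ∈ ⋃₀ G n ∨ ∃ j ≤ b.1 n, p ∈ e n j by
    obtain ⟨n, ⟨w, hw, hp⟩ | ⟨j, hj, hp⟩⟩ := h
    · exact mem_iUnion.2 ⟨n, w, Or.inl hw, hp⟩
    · exact mem_iUnion.2 ⟨n, e n j, Or.inr ⟨j, hj, rfl⟩, hp⟩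
  obtain ⟨N, hN⟩ | ⟨i, hi⟩ := p.2
  · have hNU : {n | N ≤ n} ∈ U := hU (Nat.cofinite_eq_atTop ▸ eventually_ge_atTop N)
    obtain ⟨n, hn, hNn⟩ := U.nonempty_of_mem (inter_mem (hcF p.1.1) hNU)
    refine ⟨n, Or.inl ((hG n).2.2 p hn fun i hi => ?_)⟩
    rw [hN i (le_trans hNn hi)]
    exact le_top
  · obtain rfl : p = pt i := Subtype.ext hi
    by_cases hk : LeU U k (y i)
    · obtain ⟨n, hn, hkn⟩ := U.nonempty_of_mem (inter_mem (hcF (t i)) hk)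
      exact ⟨n, Or.inl ((hG n).2.2 _ hn fun j hj => Nat.cast_le.2 (le_trans hkn (hy i hj)))⟩
    · obtain ⟨n, hn⟩ := U.nonempty_of_mem (hb ⟨i, hk⟩)
      exact ⟨n, Or.inr ⟨g i n, hn, hg i n⟩⟩

/-- If `𝔟(U) = 𝔡`, a space whose products with hereditarily Lindelöf Menger spaces are Menger has
`U`-Menger products with hereditarily Lindelöf `U`-Menger spaces of the same universe. -/
theorem uMenger_prod {X : Type u} [TopologicalSpace X] [Nonempty X]
    (hX : ∀ (Y : Type v) [TopologicalSpace Y] [T35Space Y] [Infinite Y]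
      [HereditarilyLindelofSpace Y], Menger Y → Menger (X × Y))
    {U : Ultrafilter ℕ} (hU : Free U) (hbu : frakBU U = frakD)
    {T : Type v} [TopologicalSpace T] [T35Space T] [Infinite T]
    [HereditarilyLindelofSpace T] (hT : UMenger U T) :
    UMenger U (X × T) := by
  have := (hX T hT.menger).lindelofSpace
  refine UMenger.of_forall_bounded fun f hf hmono => ?_
  by_contra! hunb
  obtain ⟨ι, z, d, hd, hdf, hdom, hsmall⟩ := exists_scale hU hbu f hunb
  classical
  let A (i : ι) (n : ℕ) : Bool := decide (d i n < f (z i) n)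
  let Y := concentratedSet (fun i => (z i).2) A fun i => f (z i)
  have hYinf : Infinite Y := Infinite.of_injective
    (fun s : T => (⟨(s, fun _ => true, fun _ => ⊤), Or.inl ⟨0, fun _ _ => rfl⟩⟩ : Y))
    fun s s' h => congrArg (fun p : Y => p.1.1) h
  have hXY : Menger (X × Y) := hX Y
    (menger_concentratedSet hU hT _ _ _ (fun i => hmono (z i)) hsmall)
  let O (n k : ℕ) : Set (X × Y) :=
    {p | (∃ i, (f (p.1, p.2.1.1) i : ℕ∞) < p.2.1.2.2 i) ∨
      ∃ m, n ≤ m ∧ m ≤ k ∧ p.2.1.2.1 m = true ∧ f (p.1, p.2.1.1) m ≤ k}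
  have hfo : ∀ m k, IsOpen {p : X × Y | f (p.1, p.2.1.1) m ≤ k} := fun m k =>
    (hf m k).preimage (f := fun p : X × Y => (p.1, p.2.1.1)) (by fun_prop)
  have hO : ∀ n k, IsOpen (O n k) := fun n k => by
    have heq : O n k = (⋃ i, ⋃ l : ℕ, {p : X × Y | f (p.1, p.2.1.1) i ≤ l} ∩
          {p | (l : ℕ∞) < p.2.1.2.2 i}) ∪
        ⋃ m ∈ Icc n k, {p : X × Y | p.2.1.2.1 m = true} ∩
          {p : X × Y | f (p.1, p.2.1.1) m ≤ k} := by
      ext p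
      simp only [O, mem_union, mem_iUnion, mem_inter_iff, mem_ofPred_eq, mem_Icc, exists_prop,
        and_assoc]
      refine or_congr (exists_congr fun i => ⟨fun h => ⟨_, le_rfl, h⟩, ?_⟩) Iff.rfl
      rintro ⟨l, hl, h⟩
      exact (Nat.cast_le.2 hl).trans_lt h
    rw [heq]
    refine (isOpen_iUnion fun i => isOpen_iUnion fun l => (hfo i l).inter
      (isOpen_lt continuous_const (by fun_prop))).union
      (isOpen_biUnion fun m _ => IsOpen.inter ?_ (hfo m k))
    exact (isOpen_discrete {true}).preimage (f := fun p : X × Y => p.2.1.2.1 m) (by fun_prop)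
  have hOmono : ∀ n, Monotone (O n) := by
    rintro n k l hkl p (h | ⟨m, h₁, h₂, h₃, h₄⟩)
    · exact Or.inl h
    · exact Or.inr ⟨m, h₁, h₂.trans hkl, h₃, h₄.trans hkl⟩
  have hOcov : ∀ n p, ∃ k, p ∈ O n k := by
    rintro n ⟨x, ⟨⟨s, a, q⟩, ⟨N, hN⟩ | ⟨i, hi⟩⟩⟩
    · refine ⟨0, Or.inl ⟨N, ?_⟩⟩
      rw [hN N le_rfl]
      exact ENat.natCast_lt_top _
    · have hnU : {m | n ≤ m} ∈ U := hU (Nat.cofinite_eq_atTop ▸ eventually_ge_atTop n)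
      obtain ⟨m, hm, hnm⟩ := U.nonempty_of_mem (inter_mem (hdf i) hnU)
      simp only [Prod.mk.injEq] at hi
      obtain ⟨rfl, rfl, rfl⟩ := hi
      exact ⟨max m (f (x, (z i).2) m), Or.inr ⟨m, hnm, le_max_left _ _,
        decide_eq_true hm, le_max_right _ _⟩⟩
  obtain ⟨c, hc⟩ := hXY.exists_frequently O hO hOmono hOcov
  obtain ⟨i, hi⟩ := hdom c
  obtain ⟨N, hN⟩ := eventually_atTop.1 hi
  obtain ⟨n, hn, h⟩ := hc ((z i).1, ⟨((z i).2, A i, fun n => (f (z i) n : ℕ∞)),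
    Or.inr ⟨i, rfl⟩⟩) N
  obtain ⟨j, hj⟩ | ⟨m, hnm, hmc, hAm, hfm⟩ := h
  · exact lt_irrefl _ hj
  · have h₁ : d i m < f (z i) m := of_decide_eq_true hAm
    have h₂ : f (z i) m ≤ c n := hfm
    have h₃ := hN n hn
    have h₄ := hd i hnm
    omega

/-- in the class of hereditarily Lindelöf spaces, each productively
Menger space is productively `U`-Menger for all ultrafilters `U` with `𝔟(U) = 𝔡`. -/
theorem stmt13
    (X : Type u) [TopologicalSpace X] [T35Space X] [Infinite X]
    (hX : ∀ (Y : Type v) [TopologicalSpace Y] [T35Space Y] [Infinite Y]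
      [HereditarilyLindelofSpace Y], Menger Y → Menger (X × Y))
    (U : Ultrafilter ℕ) (hU : Free U) (hbu : frakBU U = frakD)
    (T : Type w) [TopologicalSpace T] [T35Space T] [Infinite T]
    [HereditarilyLindelofSpace T] (hT : UMenger U T) :
    UMenger U (X × T) := by
  have hsmall : Small.{v} T := HereditarilyLindelofSpace.small
  let e := Shrink.homeomorph.{v} T
  have : T35Space (Shrink.{v} T) := e.symm.isEmbedding.t35Space
  have : Infinite (Shrink.{v} T) := Infinite.of_injective e e.injective
  have : HereditarilyLindelofSpace (Shrink.{v} T) := ⟨fun s _ => by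
    rw [e.symm.isEmbedding.isLindelof_iff]
    exact HereditarilyLindelofSpace.isLindelof _⟩
  exact (uMenger_prod hX hU hbu (hT.of_homeomorph e)).of_homeomorph
    ((Homeomorph.refl X).prodCongr e.symm)
end

section
/- Let U be a free ultrafilter on ℕ and let 2U be the ultrafilter on ℕ generated by the family {2u : u ∈ U}, where 2u := {2n : n ∈ u}. Then every U-Menger infinite Tychonoff space is 2U-Menger. -/
universe u

/-- `2U`: the ultrafilter generated by `{2u : u ∈ U}`, i.e. the pushforward of `U`
under `n ↦ 2n`. -/
def twoU (U : Ultrafilter ℕ) : Ultrafilter ℕ := U.map (fun n => 2 * n)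

/-- every `U`-Menger infinite Tychonoff space is `2U`-Menger. -/
theorem stmt14 (U : Ultrafilter ℕ) (hU : Free U)
    (X : Type u) [TopologicalSpace X] [T35Space X] [Infinite X]
    (hX : UMenger U X) : UMenger (twoU U) X := by
  intro 𝒰 h𝒰
  obtain ⟨G, hG, hGU⟩ := hX (fun n => 𝒰 (2 * n)) fun n => h𝒰 (2 * n)
  refine ⟨fun n => G (n / 2) ∩ 𝒰 n,
    fun n => ⟨Set.inter_subset_right, (hG (n / 2)).2.subset Set.inter_subset_left⟩,
    fun z => ?_⟩
  refine Ultrafilter.mem_map.2 (Filter.mem_of_superset (hGU z) ?_)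
  rintro n ⟨u, hu, hz⟩
  refine ⟨u, ⟨?_, (hG n).1 hu⟩, hz⟩
  simpa using hu
end

section
/- Assume 𝔟 = 𝔡. Then a set A ⊆ [ω]^ω is bounded if and only if A is ≤_U-bounded for every free ultrafilter U on ℕ. -/
open Cardinal

theorem Bounded.of_finite {X : Set IncSeq} (hX : X.Finite) : Bounded X := by
  refine ⟨⟨fun n => ∑ a ∈ hX.toFinset, a.1 n + n, fun m n hmn => ?_⟩, fun a ha => ?_⟩
  · exact add_lt_add_of_le_of_lt (Finset.sum_le_sum fun a _ => a.2.monotone hmn.le) hmn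
  · have h : {n | ¬ a.1 n ≤ ∑ a ∈ hX.toFinset, a.1 n + n} = ∅ := by
      ext n
      simp only [Set.mem_ofPred_eq, Set.mem_empty_iff_false, iff_false, not_not]
      exact (Finset.single_le_sum (f := fun a : IncSeq => a.1 n) (fun _ _ => Nat.zero_le _)
        (hX.mem_toFinset.2 ha)).trans (Nat.le_add_right _ _)
    exact (congrArg Set.Finite h).mpr Set.finite_empty

theorem Bounded.of_mk_lt_frakB {X : Set IncSeq} (hX : #X < frakB) : Bounded X := by
  by_contra h
  exact hX.not_ge (csInf_le' ⟨X, h, rfl⟩)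

theorem aleph0_le_frakB {A : Set IncSeq} (hA : ¬ Bounded A) : ℵ₀ ≤ frakB := by
  refine le_csInf ⟨_, A, hA, rfl⟩ ?_
  rintro c ⟨X, hX, rfl⟩
  by_contra! h
  exact hX (.of_finite (Cardinal.lt_aleph0_iff_set_finite.1 h))

/-- An unbounded set has a member exceeding `d` infinitely often on each of fewer than `𝔟` given
infinite sets. -/
theorem exists_mem_forall_infinite_inter {A : Set IncSeq} (hA : ¬ Bounded A) {ι : Type}
    (hι : #ι < frakB) (S : ι → Set ℕ) (d : IncSeq) :
    ∃ x ∈ A, ∀ i, (S i).Infinite → (S i ∩ {n | d.1 n < x.1 n}).Infinite := by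
  have hmono (i : {i // (S i).Infinite}) : StrictMono (Nat.nth (· ∈ S i)) :=
    Nat.nth_strictMono i.2
  let g (i : {i // (S i).Infinite}) : IncSeq := ⟨fun n => d.1 (Nat.nth (· ∈ S i) n),
    d.2.comp (hmono i)⟩
  obtain ⟨b, hb⟩ := Bounded.of_mk_lt_frakB (X := Set.range g)
    ((Cardinal.mk_range_le.trans (Cardinal.mk_subtype_le _)).trans_lt hι)
  obtain ⟨x, hxA, hx⟩ : ∃ x ∈ A, ¬ LeStar x.1 b.1 := by
    by_contra! h
    exact hA ⟨b, h⟩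
  refine ⟨x, hxA, fun i hi => ?_⟩
  have hgb : {n | ¬ (g ⟨i, hi⟩).1 n ≤ b.1 n}.Finite := hb _ ⟨⟨i, hi⟩, rfl⟩
  have hxb : {n | ¬ x.1 n ≤ b.1 n}.Infinite := hx
  refine ((hxb.sdiff hgb).image (hmono ⟨i, hi⟩).injective.injOn).mono ?_
  rintro _ ⟨n, ⟨hn, hn'⟩, rfl⟩
  simp only [Set.mem_ofPred_eq, not_le, not_lt] at hn hn'
  exact ⟨Nat.nth_mem_of_infinite hi n,
    (hn'.trans_lt hn).trans_le (x.2.monotone (hmono ⟨i, hi⟩).le_apply)⟩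

theorem mk_finset_lt_of_mk_lt {α : Type*} {κ : Cardinal} (hκ : ℵ₀ ≤ κ) (h : #α < κ) :
    #(Finset α) < κ := by
  cases finite_or_infinite α
  · exact (Cardinal.lt_aleph0_of_finite _).trans_le hκ
  · rwa [Cardinal.mk_finset_of_infinite]

/-- Along a family of length `𝔟`, members of an unbounded set can be chosen so that the sets where
they exceed the family have infinite finite intersections. -/
theorem exists_forall_finset_infinite {A : Set IncSeq} (hA : ¬ Bounded A)
    (d : frakB.ord.ToType → IncSeq) :
    ∃ a : frakB.ord.ToType → IncSeq, (∀ i, a i ∈ A) ∧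
      ∀ F : Finset frakB.ord.ToType, {n | ∀ i ∈ F, (d i).1 n < (a i).1 n}.Infinite := by
  classical
  have hIio (i : frakB.ord.ToType) : #(Set.Iio i) < frakB := by
    simpa using Cardinal.mk_Iio_lt i (by simp)
  have step (i : frakB.ord.ToType) (f : (j : frakB.ord.ToType) → j < i → IncSeq) :
      ∃ x ∈ A, ∀ F : Finset (Set.Iio i),
        {n | ∀ j ∈ F, (d j).1 n < (f j.1 j.2).1 n}.Infinite →
        ({n | ∀ j ∈ F, (d j).1 n < (f j.1 j.2).1 n} ∩ {n | (d i).1 n < x.1 n}).Infinite :=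
    exists_mem_forall_infinite_inter hA
      (mk_finset_lt_of_mk_lt (aleph0_le_frakB hA) (hIio i)) _ (d i)
  choose c hcA hc using step
  let a : frakB.ord.ToType → IncSeq := (wellFounded_lt (α := frakB.ord.ToType)).fix c
  have ha (i) : a i = c i fun j _ => a j := WellFounded.fix_eq _ _ _
  refine ⟨a, fun i => ha i ▸ hcA _ _, fun F => ?_⟩
  induction F using Finset.induction_on_max with
  | empty => simpa using Set.infinite_univ
  | insert i F hF ih =>
    refine (hc i (fun j _ => a j) (F.subtype (· ∈ Set.Iio i)) (ih.mono ?_)).mono ?_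
    · exact fun n hn j hj => hn j (Finset.mem_subtype.1 hj)
    · rintro n ⟨hn, hni⟩ j hj
      obtain rfl | hj := Finset.mem_insert.1 hj
      · exact ha j ▸ hni
      · exact hn ⟨j, hF j hj⟩ (Finset.mem_subtype.2 hj)

theorem exists_free_ultrafilter_forall_mem {ι : Type*} (S : ι → Set ℕ)
    (hS : ∀ F : Finset ι, {n | ∀ i ∈ F, n ∈ S i}.Infinite) :
    ∃ U : Ultrafilter ℕ, Free U ∧ ∀ i, S i ∈ U := by
  classical
  let f (F : Finset ι) : Filter ℕ := Filter.cofinite ⊓ Filter.principal {n | ∀ i ∈ F, n ∈ S i}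
  have hanti : Antitone f := fun F G hFG => inf_le_inf_left _
    (Filter.principal_mono.2 fun n hn i hi => hn i (hFG hi))
  have : (iInf f).NeBot := Filter.iInf_neBot_of_directed hanti.directed_ge
    fun F => (hS F).cofinite_inf_principal_neBot
  have hU : (Ultrafilter.of (iInf f) : Filter ℕ) ≤ iInf f := Ultrafilter.of_le _
  refine ⟨Ultrafilter.of (iInf f), hU.trans ((iInf_le f ∅).trans inf_le_left), fun i => ?_⟩
  refine Filter.le_principal_iff.1 ((hU.trans ((iInf_le f {i}).trans inf_le_right)).trans ?_)
  simp

theorem LeStar.leU {a b : ℕ → ℕ} (h : LeStar a b) {U : Ultrafilter ℕ} (hU : Free U) :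
    LeU U a b :=
  hU (Filter.mem_cofinite.2 h)

theorem exists_dominating_range :
    ∃ d : frakD.ord.ToType → IncSeq, Dominating (Set.range d) := by
  obtain ⟨D, hD, hcard⟩ : frakD ∈ {c | ∃ D : Set IncSeq, Dominating D ∧ c = #D} :=
    csInf_mem ⟨_, Set.univ, fun a => ⟨a, trivial, by simp [LeStar]⟩, rfl⟩
  obtain ⟨e⟩ := Cardinal.eq.1 ((Cardinal.mk_ord_toType frakD).trans hcard)
  refine ⟨fun i => (e i).1, fun a => ?_⟩
  obtain ⟨x, hx, hax⟩ := hD a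
  exact ⟨x, ⟨e.symm ⟨x, hx⟩, by simp⟩, hax⟩

/-- assume `𝔟 = 𝔡`. Then `A ⊆ [ω]^ω` is bounded if and only if it is
`≤_U`-bounded for every free ultrafilter `U`. -/
theorem stmt19 (hbd : frakB = frakD) (A : Set IncSeq) :
    Bounded A ↔ ∀ U : Ultrafilter ℕ, Free U → UBounded U A := by
  constructor
  · rintro ⟨b, hb⟩ U hU
    exact ⟨b, fun a ha => (hb a ha).leU hU⟩
  · intro h
    by_contra hA
    obtain ⟨d, hd⟩ : ∃ d : frakB.ord.ToType → IncSeq, Dominating (Set.range d) :=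
      hbd ▸ exists_dominating_range
    obtain ⟨a, haA, ha⟩ := exists_forall_finset_infinite hA d
    obtain ⟨U, hU, hmem⟩ := exists_free_ultrafilter_forall_mem
      (fun i => {n | (d i).1 n < (a i).1 n}) ha
    obtain ⟨b, hb⟩ := h U hU
    obtain ⟨_, ⟨i, rfl⟩, hbi⟩ := hd b
    obtain ⟨n, ⟨hn, hn'⟩, hn''⟩ := U.nonempty_of_mem
      (Filter.inter_mem (Filter.inter_mem (hmem i) (hb _ (haA i))) (hbi.leU hU))
    simp only [Set.mem_ofPred_eq] at hn hn' hn''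
    exact (hn.trans_le (hn'.trans hn'')).false
end
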